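/- arXiv:1104.4275 — 4 statements merged into one kernel-verified Lean document; each statement's English description precedes it below -/
import Mathlib

section
/- Let (∂ : H → H₀, ξ : H₀ → Aut(H)) be a crossed module of groups, i.e. ∂ is a group homomorphism and ξ an action satisfying ∂(ξ(x)(h)) = x * ∂(h) * x⁻¹ for all x ∈ H₀, h ∈ H (precrossed condition) and ξ(∂ h)(h') = h * h' * h⁻¹ for all h, h' ∈ H (Peiffer condition). Let σ : E → H₀ be a group homomorphism, and let P = {(e, h) ∈ E × H : σ(e) = ∂(h)} (a subgroup of E × H). Then: (1) for each e' ∈ E the map (e,h) ↦ (e' * e * e'⁻¹, ξ(σ e')(h)) is a well-defined automorphism of P, and this defines a group homomorphism ξ̄ : E → Aut(P); (2) the first projection ∂̄ : P → E together with ξ̄ satisfies the precrossed condition ∂̄(ξ̄(e')(p)) = e' * ∂̄(p) * e'⁻¹ and the Peiffer condition ξ̄(∂̄(p))(p') = p * p' * p⁻¹ for all p, p' ∈ P, so (∂̄, ξ̄) is a crossed module of groups; (3) the second projection restricts to a group isomorphism from ker ∂̄ = {(1,h) ∈ P} onto ker ∂. -/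
/-!
The group `E` acts on `E × H` by conjugation on `E` and through `ξ ∘ σ` on `H`. By the precrossed
condition on `(δ, ξ)` this action preserves the equation `σ e = δ h` that defines `P`. On `P` the
same equation turns `ξ (σ e)` into `ξ (δ h)`, which is conjugation by `h`, so the Peiffer condition
holds in each coordinate.
-/

section Actions

variable {G A B : Type*}

/-- The diagonal action of `G` on a product of two objects on which it acts by automorphisms. -/
def prodAction [Monoid G] [MulOneClass A] [MulOneClass B] (φ : G →* MulAut A)
    (ψ : G →* MulAut B) : G →* MulAut (A × B) where
  toFun g := (φ g).prodCongr (ψ g)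
  map_one' := by rw [map_one, map_one]; rfl
  map_mul' _ _ := by rw [map_mul, map_mul]; rfl

@[simp]
theorem prodAction_apply [Monoid G] [MulOneClass A] [MulOneClass B] (φ : G →* MulAut A)
    (ψ : G →* MulAut B) (g : G) (p : A × B) :
    prodAction φ ψ g p = (φ g p.1, ψ g p.2) :=
  rfl

/-- The restriction of an action by automorphisms to an invariant subobject. Mapping `P` into itself
is enough for invariance because `G` is a group. -/
def restrictAction {S : Type*} [Group G] [Mul A] [SetLike S A] [MulMemClass S A] (φ : G →* MulAut A)
    (P : S) (hP : ∀ g, ∀ a ∈ P, φ g a ∈ P) : G →* MulAut P where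
  toFun g :=
    { toFun := fun a => ⟨φ g a, hP g a a.2⟩
      invFun := fun a => ⟨φ g⁻¹ a, hP g⁻¹ a a.2⟩
      left_inv := fun a => by simp
      right_inv := fun a => by simp
      map_mul' := fun a b => by ext; simp }
  map_one' := by ext; simp
  map_mul' _ _ := by ext; simp

@[simp]
theorem coe_restrictAction_apply {S : Type*} [Group G] [Mul A] [SetLike S A] [MulMemClass S A]
    (φ : G →* MulAut A) (P : S) (hP : ∀ g, ∀ a ∈ P, φ g a ∈ P) (g : G) (a : P) :
    (restrictAction φ P hP g a : A) = φ g a :=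
  rfl

end Actions

section Pullback

variable {G H K : Type*} [Group G] [Group H] [Monoid K] (f : G →* K) (g : H →* K)

/-- The pullback `{(x, y) | f x = g y}` of two homomorphisms with the same codomain, as a subgroup
of the product. -/
abbrev pullbackSubgroup : Subgroup (G × H) :=
  (f.comp (MonoidHom.fst G H)).eqLocus (g.comp (MonoidHom.snd G H))

variable {f g} in
theorem mem_pullbackSubgroup {p : G × H} : p ∈ pullbackSubgroup f g ↔ f p.1 = g p.2 :=
  Iff.rfl

/-- The first projection of the pullback: the homomorphism `g` pulled back along `f`. -/
def pullbackFst : pullbackSubgroup f g →* G :=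
  (MonoidHom.fst G H).comp (pullbackSubgroup f g).subtype

/-- The second projection of the pullback: the homomorphism `f` pulled back along `g`. -/
def pullbackSnd : pullbackSubgroup f g →* H :=
  (MonoidHom.snd G H).comp (pullbackSubgroup f g).subtype

theorem map_pullbackFst (p : pullbackSubgroup f g) :
    f (pullbackFst f g p) = g (pullbackSnd f g p) :=
  p.2

variable {f g} in
theorem pullbackSubgroup_ext {p q : pullbackSubgroup f g}
    (h₁ : pullbackFst f g p = pullbackFst f g q) (h₂ : pullbackSnd f g p = pullbackSnd f g q) :
    p = q :=
  Subtype.ext (Prod.ext h₁ h₂)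

theorem bijOn_pullbackSnd_ker_pullbackFst :
    Set.BijOn (pullbackSnd f g) (pullbackFst f g).ker g.ker := by
  refine ⟨fun p hp => ?_, fun p hp q hq h => ?_, fun y hy => ?_⟩
  · calc g (pullbackSnd f g p) = f (pullbackFst f g p) := (map_pullbackFst f g p).symm
      _ = f 1 := congrArg f hp
      _ = 1 := map_one f
  · exact pullbackSubgroup_ext (hp.trans hq.symm) h
  · exact ⟨⟨(1, y), mem_pullbackSubgroup.2 ((map_one f).trans hy.symm)⟩, rfl, rfl⟩

end Pullback

/-- A precrossed module of groups: a homomorphism `δ : H →* H₀` that is equivariant for an action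
`ξ` of `H₀` on `H` and the conjugation action of `H₀` on itself. -/
structure IsPrecrossedModule {H H₀ : Type*} [Group H] [Group H₀] (δ : H →* H₀)
    (ξ : H₀ →* MulAut H) : Prop where
  map_act (x : H₀) (h : H) : δ (ξ x h) = x * δ h * x⁻¹

/-- A crossed module of groups: a precrossed module satisfying the Peiffer condition, that is, `H`
acts on itself through `δ` by conjugation. -/
structure IsCrossedModule {H H₀ : Type*} [Group H] [Group H₀] (δ : H →* H₀)
    (ξ : H₀ →* MulAut H) : Prop extends IsPrecrossedModule δ ξ where
  peiffer (h h' : H) : ξ (δ h) h' = h * h' * h⁻¹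

section PullbackAction

variable {H H₀ E : Type*} [Group H] [Group H₀] [Group E] {δ : H →* H₀} {ξ : H₀ →* MulAut H}

theorem IsPrecrossedModule.prodAction_mem_pullbackSubgroup (hδ : IsPrecrossedModule δ ξ)
    (σ : E →* H₀) (e : E) (p : E × H) (hp : p ∈ pullbackSubgroup σ δ) :
    prodAction MulAut.conj (ξ.comp σ) e p ∈ pullbackSubgroup σ δ := by
  rw [prodAction_apply, mem_pullbackSubgroup]
  calc σ (e * p.1 * e⁻¹) = σ e * σ p.1 * (σ e)⁻¹ := by simp
    _ = σ e * δ p.2 * (σ e)⁻¹ := by rw [mem_pullbackSubgroup.1 hp]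
    _ = δ (ξ (σ e) p.2) := (hδ.map_act _ _).symm

/-- The action of `E` on the pullback of a precrossed module along `σ : E →* H₀`, by conjugation on
the first coordinate and through `σ` on the second. -/
def IsPrecrossedModule.pullbackAction (hδ : IsPrecrossedModule δ ξ) (σ : E →* H₀) :
    E →* MulAut (pullbackSubgroup σ δ) :=
  restrictAction (prodAction MulAut.conj (ξ.comp σ)) (pullbackSubgroup σ δ)
    (hδ.prodAction_mem_pullbackSubgroup σ)

theorem IsPrecrossedModule.coe_pullbackAction_apply (hδ : IsPrecrossedModule δ ξ) (σ : E →* H₀)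
    (e : E) (p : pullbackSubgroup σ δ) :
    (hδ.pullbackAction σ e p : E × H) = (e * (p : E × H).1 * e⁻¹, ξ (σ e) (p : E × H).2) := by
  simp [pullbackAction]

theorem IsPrecrossedModule.pullback (hδ : IsPrecrossedModule δ ξ) (σ : E →* H₀) :
    IsPrecrossedModule (pullbackFst σ δ) (hδ.pullbackAction σ) where
  map_act e p := congrArg Prod.fst (hδ.coe_pullbackAction_apply σ e p)

theorem IsCrossedModule.pullback (hδ : IsCrossedModule δ ξ) (σ : E →* H₀) :
    IsCrossedModule (pullbackFst σ δ) (hδ.pullbackAction σ) where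
  toIsPrecrossedModule := hδ.toIsPrecrossedModule.pullback σ
  peiffer p p' := by
    refine pullbackSubgroup_ext ?_ ?_
    · simpa using (hδ.toIsPrecrossedModule.pullback σ).map_act (pullbackFst σ δ p) p'
    · calc ξ (σ (pullbackFst σ δ p)) (pullbackSnd σ δ p')
          = ξ (δ (pullbackSnd σ δ p)) (pullbackSnd σ δ p') := by rw [map_pullbackFst]
        _ = pullbackSnd σ δ p * pullbackSnd σ δ p' * (pullbackSnd σ δ p)⁻¹ := hδ.peiffer _ _
        _ = pullbackSnd σ δ (p * p' * p⁻¹) := by simp only [map_mul, map_inv]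

end PullbackAction

/-- pulling back a crossed module of groups `(δ : H → H₀, ξ)` along a
homomorphism `σ : E → H₀` yields a crossed module structure on the pullback
`P = {(e,h) : σ e = δ h}` over `E`, with kernel of the projection isomorphic to `ker δ`. -/
theorem crossed_module_pullback_group
    {H H₀ E : Type*} [Group H] [Group H₀] [Group E]
    (δ : H →* H₀) (ξ : H₀ →* MulAut H)
    (hpre : ∀ (x : H₀) (h : H), δ (ξ x h) = x * δ h * x⁻¹)
    (hpeif : ∀ h h' : H, ξ (δ h) h' = h * h' * h⁻¹)
    (σ : E →* H₀) :
    (∃ ξbar : E →* MulAut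
        ((σ.comp (MonoidHom.fst E H)).eqLocus (δ.comp (MonoidHom.snd E H))),
      (∀ (e' : E)
          (p : ((σ.comp (MonoidHom.fst E H)).eqLocus (δ.comp (MonoidHom.snd E H)))),
        ((ξbar e' p : _) : E × H) = (e' * (p : E × H).1 * e'⁻¹, ξ (σ e') (p : E × H).2)) ∧
      (∀ (e' : E) (p : _), ((ξbar e' p : _) : E × H).1 = e' * (p : E × H).1 * e'⁻¹) ∧
      (∀ p p' : ((σ.comp (MonoidHom.fst E H)).eqLocus (δ.comp (MonoidHom.snd E H))),
        ξbar ((p : E × H).1) p' = p * p' * p⁻¹)) ∧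
    Set.BijOn
      (fun p : ((σ.comp (MonoidHom.fst E H)).eqLocus (δ.comp (MonoidHom.snd E H))) =>
        (p : E × H).2)
      {p | (p : E × H).1 = 1} (δ.ker : Set H) := by
  have hδ : IsCrossedModule δ ξ := ⟨⟨hpre⟩, hpeif⟩
  have hP : IsCrossedModule (pullbackFst σ δ) (hδ.pullbackAction σ) := hδ.pullback σ
  exact ⟨⟨hδ.pullbackAction σ, hδ.coe_pullbackAction_apply σ, hP.map_act, hP.peiffer⟩,
    bijOn_pullbackSnd_ker_pullbackFst σ δ⟩
end

section
/- Let (∂_H : H → H₀) and (∂_G : G → G₀) be group homomorphisms, and let p : H → G, p₀ : H₀ → G₀ be group homomorphisms with ∂_G ∘ p = p₀ ∘ ∂_H. Assume: (a) p restricts to a bijection from ker ∂_H onto ker ∂_G; (b) for all y ∈ H₀, if p₀(y) lies in the range of ∂_G then y lies in the range of ∂_H. Then the commutative square is a pullback: for every y ∈ H₀ and g ∈ G with p₀(y) = ∂_G(g), there exists a unique h ∈ H with ∂_H(h) = y and p(h) = g. -/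
/-!
The fibre of `δH` over `δH x` is the coset `x • δH.ker`, and `p` carries it into the coset
`p x • δG.ker`, which is the fibre of `δG` over `δG (p x)`. Left translation therefore turns the
bijection between the kernels into a bijection between the fibres over corresponding base points,
as long as the fibre of `δH` is nonempty; that is what injectivity on cokernels provides.
-/

open Set
open scoped Pointwise

theorem existsUnique_mem_and_apply_eq_of_bijOn {α β : Type*} {f : α → β} {s : Set α} {t : Set β}
    (hf : BijOn f s t) {b : β} (hb : b ∈ t) : ∃! a, a ∈ s ∧ f a = b := by
  obtain ⟨a, ha, rfl⟩ := hf.surjOn hb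
  exact ⟨a, ⟨ha, rfl⟩, fun _ ⟨ha', h⟩ ↦ hf.injOn ha' ha h⟩

theorem bijOn_smul_set {M N F : Type*} [Mul M] [Mul N] [IsLeftCancelMul N] [FunLike F M N]
    [MulHomClass F M N] {f : F} {s : Set M} {t : Set N} (hf : BijOn f s t) (x : M) :
    BijOn f (x • s) (f x • t) := by
  have himage : f '' (x • s) = f x • t := by rw [image_smul_distrib, hf.image_eq]
  have hinj : InjOn f (x • s) := by
    rintro _ ⟨a, ha, rfl⟩ _ ⟨b, hb, rfl⟩ hab
    simp only [smul_eq_mul, map_mul, mul_right_inj] at hab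
    rw [hf.injOn ha hb hab]
  exact himage ▸ hinj.bijOn_image

theorem preimage_singleton_apply_eq_smul_ker {G M : Type*} [Group G] [MulOneClass M]
    (f : G →* M) (x : G) : f ⁻¹' {f x} = x • (f.ker : Set G) := by
  ext y
  rw [mem_preimage, mem_singleton_iff, f.eq_iff, mem_smul_set_iff_inv_smul_mem, smul_eq_mul,
    SetLike.mem_coe]

section

variable {H G H₀ G₀ : Type*} [Group H] [Group G] [MulOneClass H₀] [MulOneClass G₀]
  {δH : H →* H₀} {δG : G →* G₀} {p : H →* G}

theorem bijOn_preimage_singleton_of_bijOn_ker (hker : BijOn p (δH.ker : Set H) (δG.ker : Set G))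
    (x : H) : BijOn p (δH ⁻¹' {δH x}) (δG ⁻¹' {δG (p x)}) := by
  simpa only [preimage_singleton_apply_eq_smul_ker] using bijOn_smul_set hker x

theorem weak_equivalence_square_is_pullback_group_general {p₀ : H₀ → G₀}
    (hcomm : ∀ h, δG (p h) = p₀ (δH h))
    (hker : BijOn p (δH.ker : Set H) (δG.ker : Set G))
    (hcoker : ∀ y : H₀, p₀ y ∈ range δG → y ∈ range δH)
    (y : H₀) (g : G) (hyg : p₀ y = δG g) : ∃! h : H, δH h = y ∧ p h = g := by
  obtain ⟨x, rfl⟩ := hcoker y ⟨g, hyg.symm⟩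
  have hg : δG g = δG (p x) := hyg.symm.trans (hcomm x).symm
  exact existsUnique_mem_and_apply_eq_of_bijOn (bijOn_preimage_singleton_of_bijOn_ker hker x) hg

end

/-- a morphism of group "crossed-module data" inducing an isomorphism
on kernels and an injection on cokernels yields a pullback square. -/
theorem weak_equivalence_square_is_pullback_group
    {H H₀ G G₀ : Type*} [Group H] [Group H₀] [Group G] [Group G₀]
    (δH : H →* H₀) (δG : G →* G₀) (p : H →* G) (p₀ : H₀ →* G₀)
    (hcomm : ∀ h, δG (p h) = p₀ (δH h))
    (hker : Set.BijOn p (δH.ker : Set H) (δG.ker : Set G))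
    (hcoker : ∀ y : H₀, p₀ y ∈ Set.range δG → y ∈ Set.range δH) :
    ∀ (y : H₀) (g : G), p₀ y = δG g → ∃! h : H, δH h = y ∧ p h = g :=
  weak_equivalence_square_is_pullback_group_general hcomm hker hcoker
end

section
/- Let (∂_H : H → H₀, ξ_H) and (∂_G : G → G₀, ξ_G) be crossed modules of groups, and let (p, p₀) be a morphism of crossed modules (∂_G ∘ p = p₀ ∘ ∂_H and p(ξ_H(x)(h)) = ξ_G(p₀ x)(p h)) which is a weak equivalence, i.e.: p restricts to a bijection ker ∂_H → ker ∂_G; for all y ∈ H₀, p₀(y) ∈ range ∂_G implies y ∈ range ∂_H; and for every x ∈ G₀ there exist g ∈ G and y ∈ H₀ with x = ∂_G(g) * p₀(y). Form the semidirect product E_P = G ⋊ H₀ with respect to the action y ↦ ξ_G(p₀ y), i.e. (g,y)*(g',y') = (g * ξ_G(p₀ y)(g'), y*y'). Then: (1) ρ_P : E_P → G₀, (g,y) ↦ ∂_G(g) * p₀(y), is a group homomorphism; (2) ρ_P is surjective; (3) the map j : H → E_P, j(h) = ((p h)⁻¹, ∂_H(h)), is an injective group homomorphism whose range is exactly ker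 ρ_P. In particular the sequence 1 → H → E_P → G₀ → 1 is exact, so the split butterfly associated to a weak equivalence is flippable. -/
/-!
Bijectivity of `p` between the kernels controls both ends of the sequence: injectivity on `ker ∂_H`
makes `j` injective, and surjectivity onto `ker ∂_G` corrects approximate preimages. Indeed, if
`∂_G g * p₀ y = 1`, then `p₀ y` lies in the range of `∂_G`, so `y = ∂_H h` for some `h`, and `j h`
agrees with `(g, y)` up to the element `p h * g` of `ker ∂_G`. Writing this element as `p k` with
`k ∈ ker ∂_H` gives `j (k⁻¹ * h) = (g, y)`.
-/

section SplitButterfly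

variable {H H₀ G G₀ : Type*} [Group H] [Group H₀] [Group G] [Group G₀]
  {δH : H →* H₀} {δG : G →* G₀} {φ : H₀ →* MulAut G} {p : H →* G} {p₀ : H₀ →* G₀}
  (hpre : ∀ y g, δG (φ y g) = p₀ y * δG g * (p₀ y)⁻¹)
  (hpeif : ∀ h g, φ (δH h) g = p h * g * (p h)⁻¹)

/-- The homomorphism `ρ_P : (g, y) ↦ ∂_G g * p₀ y` of the split butterfly. The action `φ` of `H₀`
on `G` is `ξ_G ∘ p₀` for a morphism of crossed modules, and `hpre` is the precrossed condition of
the target, pulled back along `p₀`. -/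
def splitButterflyRho : G ⋊[φ] H₀ →* G₀ :=
  SemidirectProduct.lift δG p₀ fun y => MonoidHom.ext (hpre y)

/-- The homomorphism `j : h ↦ ((p h)⁻¹, ∂_H h)` of the split butterfly. The hypothesis
`hpeif` is the Peiffer condition of the target, pulled back along `p`. -/
def splitButterflyJ : H →* G ⋊[φ] H₀ :=
  MonoidHom.mk' (fun h => ⟨(p h)⁻¹, δH h⟩) fun h h' => by
    ext
    · simp only [SemidirectProduct.mul_left, hpeif, map_mul]
      group
    · exact map_mul δH h h'

theorem splitButterflyRho_surjective (hess : ∀ x, ∃ g y, x = δG g * p₀ y) :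
    Function.Surjective (splitButterflyRho hpre) := by
  intro x
  obtain ⟨g, y, hx⟩ := hess x
  exact ⟨⟨g, y⟩, hx.symm⟩

theorem splitButterflyJ_injective (hinj : Set.InjOn p δH.ker) :
    Function.Injective (splitButterflyJ hpeif) := by
  refine (injective_iff_map_eq_one _).2 fun h hj => ?_
  have hp : p h = 1 := inv_eq_one.1 (congrArg SemidirectProduct.left hj)
  have hδ : δH h = 1 := congrArg SemidirectProduct.right hj
  exact hinj hδ (one_mem δH.ker) (hp.trans (map_one p).symm)

theorem range_splitButterflyJ_le_ker_splitButterflyRho (hcomm : ∀ h, δG (p h) = p₀ (δH h)) :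
    (splitButterflyJ hpeif).range ≤ (splitButterflyRho hpre).ker := by
  rintro _ ⟨h, rfl⟩
  change δG (p h)⁻¹ * p₀ (δH h) = 1
  rw [map_inv, hcomm, inv_mul_cancel]

theorem ker_splitButterflyRho_le_range_splitButterflyJ (hcomm : ∀ h, δG (p h) = p₀ (δH h))
    (hsurj : Set.SurjOn p δH.ker δG.ker) (hcoker : ∀ y, p₀ y ∈ δG.range → y ∈ δH.range) :
    (splitButterflyRho hpre).ker ≤ (splitButterflyJ hpeif).range := by
  rintro ⟨g, y⟩ hgy
  have hy : p₀ y = (δG g)⁻¹ := eq_inv_of_mul_eq_one_right hgy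
  obtain ⟨h, rfl⟩ : y ∈ δH.range := hcoker y ⟨g⁻¹, by rw [map_inv, hy]⟩
  have hmem : p h * g ∈ δG.ker := by
    rw [MonoidHom.mem_ker, map_mul, hcomm, hy, inv_mul_cancel]
  obtain ⟨k, hk, hpk⟩ := hsurj hmem
  have hleft : (p (k⁻¹ * h))⁻¹ = g := by
    rw [map_mul, map_inv, hpk]
    group
  have hright : δH (k⁻¹ * h) = δH h := by
    rw [map_mul, map_inv, MonoidHom.mem_ker.1 hk, inv_one, one_mul]
  exact ⟨k⁻¹ * h, SemidirectProduct.ext hleft hright⟩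

theorem ker_splitButterflyRho_eq_range_splitButterflyJ (hcomm : ∀ h, δG (p h) = p₀ (δH h))
    (hsurj : Set.SurjOn p δH.ker δG.ker) (hcoker : ∀ y, p₀ y ∈ δG.range → y ∈ δH.range) :
    (splitButterflyRho hpre).ker = (splitButterflyJ hpeif).range :=
  le_antisymm
    (ker_splitButterflyRho_le_range_splitButterflyJ hpre hpeif hcomm hsurj hcoker)
    (range_splitButterflyJ_le_ker_splitButterflyRho hpre hpeif hcomm)

end SplitButterfly

theorem weak_equivalence_split_butterfly_flippable_general
    {H H₀ G G₀ : Type*} [Group H] [Group H₀] [Group G] [Group G₀]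
    {δH : H →* H₀} {δG : G →* G₀} {φ : H₀ →* MulAut G} {p : H →* G} {p₀ : H₀ →* G₀}
    (hpre : ∀ y g, δG (φ y g) = p₀ y * δG g * (p₀ y)⁻¹)
    (hpeif : ∀ h g, φ (δH h) g = p h * g * (p h)⁻¹) (hcomm : ∀ h, δG (p h) = p₀ (δH h))
    (hker : Set.BijOn p δH.ker δG.ker) (hcoker : ∀ y, p₀ y ∈ δG.range → y ∈ δH.range)
    (hess : ∀ x, ∃ g y, x = δG g * p₀ y) :
    ∃ ρP : G ⋊[φ] H₀ →* G₀,
      (∀ g y, ρP ⟨g, y⟩ = δG g * p₀ y) ∧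
      Function.Surjective ρP ∧
      (∀ h h', (⟨(p (h * h'))⁻¹, δH (h * h')⟩ : G ⋊[φ] H₀) =
        ⟨(p h)⁻¹, δH h⟩ * ⟨(p h')⁻¹, δH h'⟩) ∧
      Function.Injective (fun h => (⟨(p h)⁻¹, δH h⟩ : G ⋊[φ] H₀)) ∧
      (∀ x, x ∈ ρP.ker ↔ ∃ h, (⟨(p h)⁻¹, δH h⟩ : G ⋊[φ] H₀) = x) :=
  ⟨splitButterflyRho hpre, fun _ _ => rfl,
    splitButterflyRho_surjective hpre hess,
    map_mul (splitButterflyJ hpeif),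
    splitButterflyJ_injective hpeif hker.injOn,
    SetLike.ext_iff.1
      (ker_splitButterflyRho_eq_range_splitButterflyJ hpre hpeif hcomm hker.surjOn hcoker)⟩

/-- for a weak equivalence `(p, p₀)` of crossed modules of groups, the
split butterfly it induces is flippable: `ρ_P(g,y) = ∂_G g * p₀ y` is a surjective
homomorphism on the semidirect product `E_P = G ⋊ H₀`, and `j(h) = ((p h)⁻¹, ∂_H h)`
is an injective homomorphism with range `ker ρ_P`. -/
theorem weak_equivalence_split_butterfly_flippable
    {H H₀ G G₀ : Type*} [Group H] [Group H₀] [Group G] [Group G₀]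
    (δH : H →* H₀) (ξH : H₀ →* MulAut H)
    (δG : G →* G₀) (ξG : G₀ →* MulAut G)
    (hpreH : ∀ (x : H₀) (h : H), δH (ξH x h) = x * δH h * x⁻¹)
    (hpeifH : ∀ h h' : H, ξH (δH h) h' = h * h' * h⁻¹)
    (hpreG : ∀ (x : G₀) (g : G), δG (ξG x g) = x * δG g * x⁻¹)
    (hpeifG : ∀ g g' : G, ξG (δG g) g' = g * g' * g⁻¹)
    (p : H →* G) (p₀ : H₀ →* G₀)
    (hcomm : ∀ h, δG (p h) = p₀ (δH h))
    (hequiv : ∀ (x : H₀) (h : H), p (ξH x h) = ξG (p₀ x) (p h))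
    (hker : Set.BijOn p (δH.ker : Set H) (δG.ker : Set G))
    (hcoker : ∀ y : H₀, p₀ y ∈ Set.range δG → y ∈ Set.range δH)
    (hess : ∀ x : G₀, ∃ (g : G) (y : H₀), x = δG g * p₀ y) :
    ∃ ρP : (G ⋊[ξG.comp p₀] H₀) →* G₀,
      (∀ (g : G) (y : H₀), ρP ⟨g, y⟩ = δG g * p₀ y) ∧
      Function.Surjective ρP ∧
      (∀ h h' : H,
        (⟨(p (h * h'))⁻¹, δH (h * h')⟩ : G ⋊[ξG.comp p₀] H₀) =
          (⟨(p h)⁻¹, δH h⟩ : G ⋊[ξG.comp p₀] H₀) * ⟨(p h')⁻¹, δH h'⟩) ∧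
      Function.Injective
        (fun h : H => (⟨(p h)⁻¹, δH h⟩ : G ⋊[ξG.comp p₀] H₀)) ∧
      (∀ x : G ⋊[ξG.comp p₀] H₀,
        x ∈ ρP.ker ↔ ∃ h : H, (⟨(p h)⁻¹, δH h⟩ : G ⋊[ξG.comp p₀] H₀) = x) := by
  have hpeif (h : H) (g : G) : ξG.comp p₀ (δH h) g = p h * g * (p h)⁻¹ := by
    rw [MonoidHom.comp_apply, ← hcomm, hpeifG]
  exact weak_equivalence_split_butterfly_flippable_general (fun y => hpreG (p₀ y)) hpeif hcomm
    hker hcoker hess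
end

section
/- Let (∂_H : H → H₀, ξ_H) and (∂_G : G → G₀, ξ_G) be crossed modules of groups, and let E be a group with homomorphisms κ : H → E, ι : G → E, σ : E → H₀, ρ : E → G₀ forming a butterfly: σ ∘ κ = ∂_H, ρ ∘ ι = ∂_G, ρ(κ h) = 1 for all h, ι is injective with range ι = ker σ, σ is surjective, κ(ξ_H(σ e)(h)) = e * κ(h) * e⁻¹ for all e ∈ E, h ∈ H, and ι(ξ_G(ρ e)(g)) = e * ι(g) * e⁻¹ for all e ∈ E, g ∈ G. Suppose the butterfly is split by a group homomorphism s : H₀ → E with σ(s x) = x for all x. Then there is a unique function F : H → G with ι(F h) = (κ h)⁻¹ * s(∂_H h) for all h, and the pair (F, ρ ∘ s) is a morphism of crossed modules: F is a group homomorphism, ∂_G(F h) = ρ(s(∂_H h)) for all h ∈ H, and F(ξ_H(x)(h)) = ξ_G(ρ(s x))(F h) for all x ∈ H₀, h ∈ H. -/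
/-!
The map `F` measures, inside `E`, how far `κ` is from `s ∘ ∂_H`. Since `s` splits `σ`, this
discrepancy lies in `ker σ`, that is, in the image of `ι`. The action of `1 : H₀` on `H` is trivial,
so `ker σ` commutes with the image of `κ`, which makes the discrepancy multiplicative. Equivariance
holds because the endomorphism `s ∘ σ` of `E` fixes `s x`, hence commutes with conjugation by it.
-/

section SectionDefect

variable {E Q : Type*} [Group E] [Group Q]

/-- The discrepancy `e⁻¹ * s (σ e)` between `e` and the value of the section `s` at its image under
`σ`. At `e = κ h` it is the element `ι (F h)` attached to a split butterfly. -/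
def sectionDefect (σ : E →* Q) (s : Q →* E) (e : E) : E :=
  e⁻¹ * s (σ e)

theorem sectionDefect_mem_ker {σ : E →* Q} {s : Q →* E} (hs : Function.RightInverse s σ) (e : E) :
    sectionDefect σ s e ∈ σ.ker := by
  rw [MonoidHom.mem_ker, sectionDefect, map_mul, map_inv, hs, inv_mul_cancel]

theorem sectionDefect_mul_of_commute {σ : E →* Q} {s : Q →* E} {a b : E}
    (hab : Commute (sectionDefect σ s a) b) :
    sectionDefect σ s (a * b) = sectionDefect σ s a * sectionDefect σ s b :=
  calc
    (a * b)⁻¹ * s (σ (a * b)) = b⁻¹ * sectionDefect σ s a * s (σ b) := by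
      simp only [sectionDefect, map_mul, mul_inv_rev, mul_assoc]
    _ = sectionDefect σ s a * b⁻¹ * s (σ b) := by rw [hab.inv_right.eq]
    _ = sectionDefect σ s a * sectionDefect σ s b := mul_assoc _ _ _

theorem sectionDefect_conj {σ : E →* Q} {s : Q →* E} (hs : Function.RightInverse s σ)
    (x : Q) (e : E) :
    sectionDefect σ s (s x * e * (s x)⁻¹) = s x * sectionDefect σ s e * (s x)⁻¹ := by
  simp only [sectionDefect, map_mul, map_inv, hs x]
  group

end SectionDefect

theorem commute_apply_of_mem_ker {E Q H : Type*} [Group E] [Group Q] [Group H]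
    {σ : E →* Q} {κ : H → E} {ξ : Q →* MulAut H}
    (hκ : ∀ e h, κ (ξ (σ e) h) = e * κ h * e⁻¹) {e : E} (he : e ∈ σ.ker) (h : H) :
    Commute e (κ h) := by
  have conj_trivial : κ h = e * κ h * e⁻¹ := by
    simpa only [MonoidHom.mem_ker.mp he, map_one, MulAut.one_apply] using hκ e h
  exact (eq_mul_inv_iff_mul_eq.mp conj_trivial).symm

theorem existsUnique_forall_apply_eq_of_injective {α β γ : Type*} {ι : β → γ}
    (hι : Function.Injective ι) {f : α → γ} (hf : ∀ a, f a ∈ Set.range ι) :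
    ∃! F : α → β, ∀ a, ι (F a) = f a := by
  choose F hF using hf
  exact ⟨F, hF, fun F' hF' => funext fun a => hι ((hF' a).trans (hF a).symm)⟩

theorem split_butterfly_gives_crossed_module_morphism_general
    {H H₀ G G₀ E : Type*} [Group H] [Group H₀] [Group G] [Group G₀] [Group E]
    (δH : H →* H₀) (ξH : H₀ →* MulAut H)
    (δG : G →* G₀) (ξG : G₀ →* MulAut G)
    (κ : H →* E) (ι : G →* E) (σ : E →* H₀) (ρ : E →* G₀)
    (hσκ : ∀ h, σ (κ h) = δH h)
    (hρι : ∀ g, ρ (ι g) = δG g)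
    (hρκ : ∀ h, ρ (κ h) = 1)
    (hιinj : Function.Injective ι) (hιker : σ.ker ≤ ι.range)
    (hκconj : ∀ (e : E) (h : H), κ (ξH (σ e) h) = e * κ h * e⁻¹)
    (hιconj : ∀ (e : E) (g : G), ι (ξG (ρ e) g) = e * ι g * e⁻¹)
    (s : H₀ →* E) (hs : ∀ x, σ (s x) = x) :
    (∃! F : H → G, ∀ h, ι (F h) = (κ h)⁻¹ * s (δH h)) ∧
    (∀ F : H → G, (∀ h, ι (F h) = (κ h)⁻¹ * s (δH h)) →
      (∀ h h', F (h * h') = F h * F h') ∧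
      (∀ h, δG (F h) = ρ (s (δH h))) ∧
      (∀ (x : H₀) (h : H), F (ξH x h) = ξG (ρ (s x)) (F h))) := by
  simp only [← hσκ, ← hρι]
  have defect_mem_ker (h : H) : sectionDefect σ s (κ h) ∈ σ.ker := sectionDefect_mem_ker hs (κ h)
  refine ⟨existsUnique_forall_apply_eq_of_injective hιinj fun h => hιker (defect_mem_ker h), ?_⟩
  intro F (hF : ∀ h, ι (F h) = sectionDefect σ s (κ h))
  refine ⟨fun h h' => hιinj ?_, fun h => ?_, fun x h => hιinj ?_⟩
  · have hcomm : Commute (sectionDefect σ s (κ h)) (κ h') :=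
      commute_apply_of_mem_ker hκconj (defect_mem_ker h) h'
    rw [map_mul, hF, hF, hF, map_mul, sectionDefect_mul_of_commute hcomm]
  · rw [hF, sectionDefect, map_mul, map_inv, hρκ, inv_one, one_mul]
  · have hκx : κ (ξH x h) = s x * κ h * (s x)⁻¹ := by
      simpa only [hs] using hκconj (s x) h
    rw [hF, hκx, sectionDefect_conj hs, hιconj, hF]

/-- a split butterfly between crossed modules of groups determines a
morphism of crossed modules `(F, ρ ∘ s)`, where `F` is the unique map with
`ι (F h) = (κ h)⁻¹ * s (∂_H h)`. -/
theorem split_butterfly_gives_crossed_module_morphism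
    {H H₀ G G₀ E : Type*} [Group H] [Group H₀] [Group G] [Group G₀] [Group E]
    (δH : H →* H₀) (ξH : H₀ →* MulAut H)
    (δG : G →* G₀) (ξG : G₀ →* MulAut G)
    (hpreH : ∀ (x : H₀) (h : H), δH (ξH x h) = x * δH h * x⁻¹)
    (hpeifH : ∀ h h' : H, ξH (δH h) h' = h * h' * h⁻¹)
    (hpreG : ∀ (x : G₀) (g : G), δG (ξG x g) = x * δG g * x⁻¹)
    (hpeifG : ∀ g g' : G, ξG (δG g) g' = g * g' * g⁻¹)
    (κ : H →* E) (ι : G →* E) (σ : E →* H₀) (ρ : E →* G₀)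
    (hσκ : ∀ h, σ (κ h) = δH h)
    (hρι : ∀ g, ρ (ι g) = δG g)
    (hρκ : ∀ h, ρ (κ h) = 1)
    (hιinj : Function.Injective ι) (hιker : ι.range = σ.ker)
    (hσsurj : Function.Surjective σ)
    (hκconj : ∀ (e : E) (h : H), κ (ξH (σ e) h) = e * κ h * e⁻¹)
    (hιconj : ∀ (e : E) (g : G), ι (ξG (ρ e) g) = e * ι g * e⁻¹)
    (s : H₀ →* E) (hs : ∀ x, σ (s x) = x) :
    (∃! F : H → G, ∀ h, ι (F h) = (κ h)⁻¹ * s (δH h)) ∧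
    (∀ F : H → G, (∀ h, ι (F h) = (κ h)⁻¹ * s (δH h)) →
      (∀ h h', F (h * h') = F h * F h') ∧
      (∀ h, δG (F h) = ρ (s (δH h))) ∧
      (∀ (x : H₀) (h : H), F (ξH x h) = ξG (ρ (s x)) (F h))) :=
  split_butterfly_gives_crossed_module_morphism_general δH ξH δG ξG κ ι σ ρ hσκ hρι hρκ hιinj
    hιker.ge hκconj hιconj s hs
end
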